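/- arXiv:1101.1936 — 2 statements merged into one kernel-verified Lean document; each statement's English description precedes it below -/
import Mathlib

section
/- Let R be a right artinian ring with φ-dim(R) = 0. Then every finitely generated right R-module has projective dimension either 0 or infinity, and consequently ψ(M) = φ(M) = 0 for all finitely generated M; in particular ψ-dim(R) = 0. -/
open Module Function

universe u

variable (R : Type u) [Ring R]

/-- A finitely generated right `R`-module, encoded as a module over `Rᵐᵒᵖ`. -/
structure FGMod where
  carrier : Type u
  [isAddCommGroup : AddCommGroup carrier]
  [isModule : Module Rᵐᵒᵖ carrier]
  [isFinite : Module.Finite Rᵐᵒᵖ carrier]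

attribute [instance] FGMod.isAddCommGroup FGMod.isModule FGMod.isFinite

instance : CoeSort (FGMod R) (Type u) := ⟨FGMod.carrier⟩

variable {R}

/-- Isomorphism of f.g. right modules. -/
def FGMod.Iso (M N : FGMod R) : Prop := Nonempty (M ≃ₗ[Rᵐᵒᵖ] N)

/-- Direct sum. -/
def FGMod.prod (M N : FGMod R) : FGMod R := ⟨M × N⟩

/-- `M^k`, the direct sum of `k` copies of `M`. -/
def FGMod.pow (M : FGMod R) (k : ℕ) : FGMod R := ⟨Fin k → M⟩

/-- `N` is (isomorphic to) a direct summand of `M`. -/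
def FGMod.IsSummand (N M : FGMod R) : Prop :=
  ∃ A B : Submodule Rᵐᵒᵖ M, IsCompl A B ∧ Nonempty (N ≃ₗ[Rᵐᵒᵖ] A)

/-- `M` is indecomposable. -/
def FGMod.Indec (M : FGMod R) : Prop :=
  Nontrivial M ∧ ∀ A B : Submodule Rᵐᵒᵖ M, IsCompl A B → A = ⊥ ∨ B = ⊥

/-- `M` is projective. -/
def FGMod.Proj (M : FGMod R) : Prop := Module.Projective Rᵐᵒᵖ M

/-- `f : P → M` is a projective cover: `P` projective, `f` surjective with superfluous kernel. -/
def IsProjCover (M P : FGMod R) (f : P →ₗ[Rᵐᵒᵖ] M) : Prop :=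
  P.Proj ∧ Surjective f ∧ ∀ N : Submodule Rᵐᵒᵖ P, N ⊔ LinearMap.ker f = ⊤ → N = ⊤

/-- `N` is a (first) syzygy of `M`: the kernel of a projective cover of `M`. -/
def IsSyzygy (M N : FGMod R) : Prop :=
  ∃ (P : FGMod R) (f : P →ₗ[Rᵐᵒᵖ] M),
    IsProjCover M P f ∧ Nonempty (N ≃ₗ[Rᵐᵒᵖ] LinearMap.ker f)

/-- `N` is an `n`-th syzygy of `M`. -/
def IsSyzygyN : ℕ → FGMod R → FGMod R → Prop
  | 0, M, N => M.Iso N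
  | n+1, M, N => ∃ L, IsSyzygy M L ∧ IsSyzygyN n L N

/-- `M` has projective dimension at most `n`. -/
def HasPdLE : ℕ → FGMod R → Prop
  | 0, M => M.Proj
  | n+1, M => M.Proj ∨ ∃ N, IsSyzygy M N ∧ HasPdLE n N

/-- `M` has finite projective dimension. -/
def FinPd (M : FGMod R) : Prop := ∃ n, HasPdLE n M

/-- The projective dimension of `M` (junk value if infinite). -/
noncomputable def pdIT (M : FGMod R) : ℕ := sInf {n | HasPdLE n M}

variable (R)

/-- The Igusa–Todorov relations in the free abelian group on f.g. right modules:
`[A] - [B] - [C]` whenever `A ≅ B ⊕ C`, and `[P]` for `P` projective. -/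
def ITRel : Set (FreeAbelianGroup (FGMod R)) :=
  {x | ∃ A B C : FGMod R, Nonempty (A ≃ₗ[Rᵐᵒᵖ] (B × C : Type u)) ∧
        x = FreeAbelianGroup.of A - FreeAbelianGroup.of B - FreeAbelianGroup.of C} ∪
  {x | ∃ P : FGMod R, P.Proj ∧ x = FreeAbelianGroup.of P}

/-- The Igusa–Todorov group `K`. -/
def ITK := FreeAbelianGroup (FGMod R) ⧸ AddSubgroup.closure (ITRel R)

noncomputable instance : AddCommGroup (ITK R) :=
  QuotientAddGroup.Quotient.addCommGroup _

/-- The class `[M]` in `K`. -/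
noncomputable def ITcls (M : FGMod R) : ITK R := QuotientAddGroup.mk (FreeAbelianGroup.of M)

/-- `⟨M⟩`: the subgroup of `K` generated by the indecomposable non-projective
direct summands of `M`. -/
noncomputable def ITgen (M : FGMod R) : AddSubgroup (ITK R) :=
  AddSubgroup.closure
    {x | ∃ N : FGMod R, N.IsSummand M ∧ N.Indec ∧ ¬N.Proj ∧ x = ITcls R N}

/-- The rank of a subgroup of `K`. -/
noncomputable def rkIT (H : AddSubgroup (ITK R)) : ℕ :=
  Module.finrank ℤ (AddSubgroup.toIntSubmodule H)

/-- `OmK` is a syzygy endomorphism of `K`: a group endomorphism sending `[M]` to `[ΩM]`. -/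
def IsSyzygyEnd (OmK : AddMonoid.End (ITK R)) : Prop :=
  ∀ M N : FGMod R, IsSyzygy M N → OmK (ITcls R M) = ITcls R N

/-- The Igusa–Todorov function `φ`: the least `n` such that the rank of
`Ω^i⟨M⟩` equals that of `Ω^n⟨M⟩` for all `i ≥ n`. -/
noncomputable def phiIT (OmK : AddMonoid.End (ITK R)) (M : FGMod R) : ℕ :=
  sInf {n | ∀ i, n ≤ i →
    rkIT R ((ITgen R M).map ((OmK ^ i : AddMonoid.End (ITK R)) : ITK R →+ ITK R))
      = rkIT R ((ITgen R M).map ((OmK ^ n : AddMonoid.End (ITK R)) : ITK R →+ ITK R))}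

/-- The second Igusa–Todorov function `ψ`. -/
noncomputable def psiIT (OmK : AddMonoid.End (ITK R)) (M : FGMod R) : ℕ :=
  phiIT R OmK M + sSup {d | ∃ N X : FGMod R, IsSyzygyN (phiIT R OmK M) M N ∧
      X.IsSummand N ∧ FinPd X ∧ d = pdIT X}

/-- The socle of a module: the sum of its simple submodules. -/
def socleIT (M : FGMod R) : Submodule Rᵐᵒᵖ M :=
  sSup {S : Submodule Rᵐᵒᵖ M | IsSimpleModule Rᵐᵒᵖ S}

/-!
A non-projective indecomposable module `X` with projective syzygy has `φ(X) ≥ 1`: the syzygy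
operator kills `[X]`, whereas `[X]` has infinite order in the Igusa–Todorov group `K`, so the rank
of `⟨X⟩` drops from `1` to `0`. The infinite order is the part of the Krull–Schmidt theorem that is
needed: as `End X` is local, counting the copies of `X` in direct decompositions is a homomorphism
`K → ℤ` sending `[X]` to `1`. If `φ` vanishes, it follows that a module of projective dimension at
most `1` has only projective indecomposable summands, and so is itself projective; an induction
along syzygies extends this to every finite projective dimension.
-/

section LocalEndomorphismRing

instance (priority := 100) isDedekindFiniteMonoid_of_isLocalRing (S : Type*) [Ring S]
    [IsLocalRing S] : IsDedekindFiniteMonoid S where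
  mul_eq_one_symm {a b} hab := by
    have hidem : b * a * (b * a) = b * a := by
      rw [mul_assoc, ← mul_assoc a, hab, one_mul]
    rcases IsLocalRing.isUnit_or_isUnit_of_add_one (add_sub_cancel (b * a) 1) with h | h
    · exact h.mul_eq_left.mp hidem
    · have hzero : b * a = 0 := h.mul_right_eq_zero.mp (by rw [sub_mul, one_mul, hidem, sub_self])
      refine absurd ?_ (one_ne_zero (α := S))
      calc (1 : S) = a * (b * a) * b := by rw [← mul_assoc, hab, one_mul, hab]
        _ = 0 := by rw [hzero, mul_zero, zero_mul]

variable {A : Type*} [Ring A]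

lemma isLocalRing_end_of_indecomposable {X : Type*} [AddCommGroup X] [Module A X] [IsArtinian A X]
    [IsNoetherian A X] [Nontrivial X]
    (hX : ∀ U V : Submodule A X, IsCompl U V → U = ⊥ ∨ V = ⊥) :
    IsLocalRing (Module.End A X) := by
  refine .of_isUnit_or_isUnit_one_sub_self fun a => ?_
  obtain ⟨n, hn⟩ := a.eventually_isCompl_ker_pow_range_pow.exists_forall_of_atTop
  rcases hX _ _ (hn (n + 1) n.le_succ) with hker | hrange
  · have hinj : Injective (⇑(a ^ n) ∘ a) := LinearMap.ker_eq_bot.mp hker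
    exact .inl <| (Module.End.isUnit_iff a).mpr <|
      IsArtinian.bijective_of_injective_endomorphism a hinj.of_comp
  · exact .inr <| IsNilpotent.isUnit_one_sub ⟨n + 1, LinearMap.range_eq_bot.mp hrange⟩

end LocalEndomorphismRing

section Multiplicity

variable {A : Type*} [Ring A] {X M N : Type*} [AddCommGroup X] [Module A X]
  [IsLocalRing (Module.End A X)] [AddCommGroup M] [Module A M] [AddCommGroup N] [Module A N]

variable (A X M) in
/-- The radical of `Hom(M, X)` for `X` with local endomorphism ring: the maps `M → X` that are not
split epimorphisms, encoded by the condition that no composite `X → M → X` is invertible. -/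
def radHom : Submodule (Module.End A X) (M →ₗ[A] X) where
  carrier := {g | ∀ f : X →ₗ[A] M, ¬IsUnit (g ∘ₗ f : Module.End A X)}
  add_mem' {a b} ha hb f hf := by
    rw [LinearMap.add_comp] at hf
    exact (IsLocalRing.isUnit_or_isUnit_of_isUnit_add hf).elim (ha f) (hb f)
  zero_mem' f hf := by
    rw [LinearMap.zero_comp] at hf
    exact not_isUnit_zero hf
  smul_mem' _ _ hg f hf := hg f (isUnit_of_mul_isUnit_right hf)

variable (A X M) in
/-- The multiplicity of `X` as a direct summand of `M`, for `X` with local endomorphism ring: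
the dimension of `Hom(M, X) / rad(M, X)` over the residue division ring of `End X`, expressed as a
length over `End X`. -/
noncomputable def summandMultiplicity : ℕ∞ :=
  Module.length (Module.End A X) ((M →ₗ[A] X) ⧸ radHom A X M)

lemma comp_mem_radHom {g : M →ₗ[A] X} (hg : g ∈ radHom A X M) (h : N →ₗ[A] M) :
    g ∘ₗ h ∈ radHom A X N :=
  fun f => hg (h ∘ₗ f)

lemma mem_radHom_prod_iff {g : M × N →ₗ[A] X} : g ∈ radHom A X (M × N) ↔
    g ∘ₗ LinearMap.inl A M N ∈ radHom A X M ∧ g ∘ₗ LinearMap.inr A M N ∈ radHom A X N := by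
  refine ⟨fun hg => ⟨comp_mem_radHom hg _, comp_mem_radHom hg _⟩, fun ⟨hl, hr⟩ => ?_⟩
  rw [← LinearMap.coprod_comp_inl_inr g, LinearMap.coprod]
  exact add_mem (comp_mem_radHom hl _) (comp_mem_radHom hr _)

lemma exists_section_of_notMem_radHom {g : M →ₗ[A] X} (hg : g ∉ radHom A X M) :
    ∃ f : X →ₗ[A] M, g ∘ₗ f = LinearMap.id := by
  obtain ⟨f, u, hu⟩ : ∃ f : X →ₗ[A] M, IsUnit (g ∘ₗ f : Module.End A X) := by
    simpa [radHom] using hg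
  refine ⟨f ∘ₗ (↑u⁻¹ : Module.End A X), ?_⟩
  rw [← LinearMap.comp_assoc, ← hu]
  exact u.mul_inv

lemma summandMultiplicity_eq_zero_iff : summandMultiplicity A X M = 0 ↔ radHom A X M = ⊤ := by
  rw [summandMultiplicity, Module.length_eq_zero_iff, Submodule.Quotient.subsingleton_iff]

lemma summandMultiplicity_congr (e : M ≃ₗ[A] N) :
    summandMultiplicity A X M = summandMultiplicity A X N := by
  refine (Submodule.Quotient.equiv _ _ (e.congrLeft X (Module.End A X)) ?_).length_eq
  ext g
  refine ⟨?_, fun hg => ⟨g ∘ₗ e.toLinearMap, comp_mem_radHom hg _, ?_⟩⟩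
  · rintro ⟨g, hg, rfl⟩
    exact comp_mem_radHom hg _
  · ext; simp

lemma summandMultiplicity_prod : summandMultiplicity A X (M × N) =
    summandMultiplicity A X M + summandMultiplicity A X N := by
  let restrict : (M × N →ₗ[A] X) →ₗ[Module.End A X]
      ((M →ₗ[A] X) ⧸ radHom A X M) × ((N →ₗ[A] X) ⧸ radHom A X N) :=
    LinearMap.prodMap (radHom A X M).mkQ (radHom A X N).mkQ ∘ₗ
      (LinearMap.coprodEquiv (R := A) (Module.End A X)).symm.toLinearMap
  have hsurj : Surjective restrict :=
    ((Submodule.mkQ_surjective _).prodMap (Submodule.mkQ_surjective _)).comp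
      (LinearEquiv.surjective _)
  have hker : LinearMap.ker restrict = radHom A X (M × N) := by
    ext g
    rw [mem_radHom_prod_iff, ← Submodule.Quotient.mk_eq_zero (radHom A X M),
      ← Submodule.Quotient.mk_eq_zero (radHom A X N)]
    exact Prod.mk_eq_zero
  rw [summandMultiplicity, summandMultiplicity, summandMultiplicity, ← Module.length_prod, ← hker]
  exact (restrict.quotKerEquivOfSurjective hsurj).length_eq

lemma summandMultiplicity_self : summandMultiplicity A X X = 1 := by
  rw [summandMultiplicity, Module.length_eq_one_iff, isSimpleModule_iff_isCoatom]
  refine ⟨fun h => ?_, fun I hI => ?_⟩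
  · have hid : LinearMap.id ∈ radHom A X X := h ▸ Submodule.mem_top
    exact hid LinearMap.id isUnit_one
  · obtain ⟨g, hgI, hg⟩ := SetLike.exists_of_lt hI
    obtain ⟨f, hf⟩ := exists_section_of_notMem_radHom hg
    have hunit : IsUnit (g : Module.End A X) := .of_mul_eq_one f hf
    exact Ideal.eq_top_of_isUnit_mem (I := I) hgI hunit

lemma summandMultiplicity_eq_zero_of_projective [Module.Projective A M]
    (hX : ¬Module.Projective A X) : summandMultiplicity A X M = 0 := by
  refine summandMultiplicity_eq_zero_iff.mpr (eq_top_iff.mpr fun g _ => ?_)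
  by_contra hg
  obtain ⟨f, hf⟩ := exists_section_of_notMem_radHom hg
  exact hX (.of_split f g hf)

-- Splitting off one copy of `X` lowers the multiplicity by one and leaves a proper submodule.
lemma summandMultiplicity_submodule_ne_top [IsArtinian A M] (U : Submodule A M) :
    summandMultiplicity A X U ≠ ⊤ := by
  induction U using WellFoundedLT.induction with
  | ind U ih =>
    by_cases hU : radHom A X U = ⊤
    · simp [summandMultiplicity_eq_zero_iff.mpr hU]
    obtain ⟨g, -, hg⟩ := SetLike.exists_of_lt (lt_top_iff_ne_top.mpr hU)
    obtain ⟨f, hf⟩ := exists_section_of_notMem_radHom hg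
    let e : U ≃ₗ[A] LinearMap.ker g × X := ((LinearMap.exact_subtype_ker_map g).splitSurjectiveEquiv
      (LinearMap.ker g).injective_subtype ⟨f, hf⟩).1
    have hlt : (LinearMap.ker g).map U.subtype < U := by
      refine (Submodule.map_subtype_le U _).lt_of_ne fun h => hg ?_
      have hker : LinearMap.ker g = ⊤ := by
        apply Submodule.map_injective_of_injective U.injective_subtype
        rw [h, Submodule.map_subtype_top]
      rw [LinearMap.ker_eq_top.mp hker]
      exact zero_mem _
    rw [summandMultiplicity_congr e, summandMultiplicity_prod, summandMultiplicity_self,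
      summandMultiplicity_congr ((LinearMap.ker g).equivMapOfInjective _ U.injective_subtype)]
    exact WithTop.add_ne_top.mpr ⟨ih _ hlt, ENat.one_ne_top⟩

variable (A X M) in
lemma summandMultiplicity_ne_top [IsArtinian A M] : summandMultiplicity A X M ≠ ⊤ := by
  rw [← summandMultiplicity_congr Submodule.topEquiv]
  exact summandMultiplicity_submodule_ne_top ⊤

end Multiplicity

section ProjectiveModules

variable {A : Type*} [Ring A]

-- A minimal submodule `Q` with `f Q = M` works: lifting `f` through `Q → M` gives `P → Q` whose
-- restriction to `Q` is surjective by minimality, hence bijective, so `Q` is a summand of `P`.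
lemma exists_projectiveCover_submodule {P M : Type*} [AddCommGroup P] [Module A P]
    [AddCommGroup M] [Module A M] [Module.Projective A P] [IsArtinian A P] [IsNoetherian A P]
    {f : P →ₗ[A] M} (hf : Surjective f) :
    ∃ Q : Submodule A P, Module.Projective A Q ∧ Surjective (f.domRestrict Q) ∧
      ∀ N : Submodule A Q, N ⊔ LinearMap.ker (f.domRestrict Q) = ⊤ → N = ⊤ := by
  obtain ⟨Q, hQ, hmin⟩ := IsArtinian.set_has_minimal {Q : Submodule A P | Q.map f = ⊤}
    ⟨⊤, by simpa [LinearMap.range_eq_top] using hf⟩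
  have hQf : LinearMap.range (f.domRestrict Q) = ⊤ := by rwa [LinearMap.range_domRestrict]
  have hsurj : Surjective (f.domRestrict Q) := LinearMap.range_eq_top.mp hQf
  have heq_top (N : Submodule A Q) (hN : N.map (f.domRestrict Q) = ⊤) : N = ⊤ := by
    have hmap : (N.map Q.subtype).map f = ⊤ := by rwa [← Submodule.map_comp]
    have := (Submodule.map_subtype_le Q N).eq_of_not_lt (hmin _ hmap)
    apply Submodule.map_injective_of_injective Q.injective_subtype
    rw [this, Submodule.map_subtype_top]
  refine ⟨Q, ?_, hsurj, fun N hN => heq_top N ((LinearMap.map_eq_top_iff hQf).mpr hN)⟩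
  obtain ⟨g, hg⟩ := Module.projective_lifting_property (f.domRestrict Q) f hsurj
  have hcomp : f.domRestrict Q ∘ₗ g.domRestrict Q = f.domRestrict Q :=
    LinearMap.ext fun x => LinearMap.congr_fun hg x
  have hbij : Bijective (g.domRestrict Q) := by
    refine IsNoetherian.bijective_of_surjective_endomorphism _ (LinearMap.range_eq_top.mp ?_)
    apply heq_top
    rw [← LinearMap.range_comp, hcomp, hQf]
  let e : Q ≃ₗ[A] Q := .ofBijective _ hbij
  exact .of_split (Q.subtype ∘ₗ e.symm.toLinearMap) g
    (LinearMap.ext fun x => e.apply_symm_apply x)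

end ProjectiveModules

section ProjectiveDimension

open CategoryTheory

variable {A : Type u} [Ring A]

lemma hasProjectiveDimensionLE_one_iff_projective_ker {M P : Type u} [AddCommGroup M] [Module A M]
    [AddCommGroup P] [Module A P] [Module.Projective A P] {f : P →ₗ[A] M} (hf : Surjective f) :
    HasProjectiveDimensionLE (ModuleCat.of A M) 1 ↔ Module.Projective A (LinearMap.ker f) := by
  let S := ModuleCat.shortComplexOfCompEqZero (LinearMap.ker f).subtype f
    f.comp_ker_subtype
  have hS : S.ShortExact := ModuleCat.shortComplex_shortExact S
    (LinearMap.exact_subtype_ker_map f) (Submodule.subtype_injective _) hf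
  have hP : Projective S.X₂ := (IsProjective.iff_projective P).mp inferInstance
  rw [IsProjective.iff_projective, projective_iff_hasProjectiveDimensionLT_one]
  exact hS.hasProjectiveDimensionLT_X₃_iff 0 hP

lemma hasProjectiveDimensionLE_of_retract {X M : Type u} [AddCommGroup X] [Module A X]
    [AddCommGroup M] [Module A M] {i : X →ₗ[A] M} {p : M →ₗ[A] X} (hpi : p ∘ₗ i = LinearMap.id)
    (n : ℕ) [HasProjectiveDimensionLE (ModuleCat.of A M) n] :
    HasProjectiveDimensionLE (ModuleCat.of A X) n := by
  have retract : Retract (ModuleCat.of A X) (ModuleCat.of A M) :=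
    { i := ModuleCat.ofHom i
      r := ModuleCat.ofHom p
      retract := by rw [← ModuleCat.ofHom_comp, hpi]; rfl }
  exact retract.hasProjectiveDimensionLT (n + 1)

end ProjectiveDimension

section FGMod

variable {R}

namespace FGMod

lemma isSummand_iff_exists_retraction {X M : FGMod R} : X.IsSummand M ↔
    ∃ (i : X →ₗ[Rᵐᵒᵖ] M) (p : M →ₗ[Rᵐᵒᵖ] X), p ∘ₗ i = LinearMap.id := by
  constructor
  · rintro ⟨U, V, hUV, ⟨e⟩⟩
    exact ⟨U.subtype ∘ₗ e, e.symm.toLinearMap ∘ₗ Submodule.projectionOnto U V hUV, by ext; simp⟩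
  · rintro ⟨i, p, hpi⟩
    have hleft : LeftInverse p i := LinearMap.congr_fun hpi
    refine ⟨LinearMap.range i, _, LinearMap.isCompl_of_proj (f := i.rangeRestrict ∘ₗ p) ?_,
      ⟨.ofLeftInverse hleft⟩⟩
    rintro ⟨_, x, rfl⟩
    ext
    simp [hleft x]

lemma IsSummand.refl (M : FGMod R) : M.IsSummand M :=
  ⟨⊤, ⊥, isCompl_top_bot, ⟨Submodule.topEquiv.symm⟩⟩

lemma IsSummand.trans {X Y Z : FGMod R} (hXY : X.IsSummand Y) (hYZ : Y.IsSummand Z) :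
    X.IsSummand Z := by
  obtain ⟨i, p, hpi⟩ := isSummand_iff_exists_retraction.mp hXY
  obtain ⟨j, q, hqj⟩ := isSummand_iff_exists_retraction.mp hYZ
  refine isSummand_iff_exists_retraction.mpr ⟨j ∘ₗ i, p ∘ₗ q, ?_⟩
  rw [LinearMap.comp_assoc, ← LinearMap.comp_assoc i, hqj, LinearMap.id_comp, hpi]

lemma Indec.nonempty_equiv_of_isSummand {X Y : FGMod R} (hX : X.Indec) (hYX : Y.IsSummand X)
    [Nontrivial Y] : Nonempty (Y ≃ₗ[Rᵐᵒᵖ] X) := by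
  obtain ⟨U, V, hUV, ⟨e⟩⟩ := hYX
  rcases hX.2 U V hUV with rfl | rfl
  · exact absurd e.symm.surjective.subsingleton (not_subsingleton Y)
  · exact ⟨e.trans (.ofTop U (by simpa using hUV.sup_eq_top))⟩

theorem proj_of_forall_indec_isSummand [IsArtinianRing Rᵐᵒᵖ] (M : FGMod R)
    (hM : ∀ X : FGMod R, X.IsSummand M → X.Indec → X.Proj) : M.Proj := by
  induction hlen : Module.length Rᵐᵒᵖ M using WellFoundedLT.induction generalizing M with
  | ind d ih =>
    by_cases hindec : M.Indec
    · exact hM M (.refl M) hindec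
    rcases subsingleton_or_nontrivial M with hzero | hnontriv
    · exact inferInstanceAs (Module.Projective Rᵐᵒᵖ M)
    obtain ⟨U, V, hUV, hU, hV⟩ : ∃ U V : Submodule Rᵐᵒᵖ M, IsCompl U V ∧ U ≠ ⊥ ∧ V ≠ ⊥ := by
      simpa [Indec, hnontriv] using hindec
    have hproj {U V : Submodule Rᵐᵒᵖ M} (hUV : IsCompl U V) (hV : V ≠ ⊥) :
        Module.Projective Rᵐᵒᵖ U := by
      have hlt : Module.length Rᵐᵒᵖ U < d := hlen ▸ Submodule.length_lt fun hU =>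
        hV (by simpa [hU] using hUV.inf_eq_bot)
      exact ih _ hlt ⟨U⟩ (fun X hX => hM X (hX.trans ⟨U, V, hUV, ⟨.refl _ _⟩⟩)) rfl
    have := hproj hUV hV
    have := hproj hUV.symm hU
    exact Module.Projective.of_equiv (Submodule.prodEquivOfIsCompl U V hUV)

end FGMod

theorem exists_isProjCover [IsArtinianRing Rᵐᵒᵖ] (M : FGMod R) :
    ∃ (P : FGMod R) (f : P →ₗ[Rᵐᵒᵖ] M), IsProjCover M P f := by
  obtain ⟨n, f, hf⟩ := Module.Finite.exists_fin' Rᵐᵒᵖ M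
  obtain ⟨Q, hQ, hsurj, hsuperfluous⟩ := exists_projectiveCover_submodule hf
  exact ⟨⟨Q⟩, f.domRestrict Q, hQ, hsurj, hsuperfluous⟩

lemma exists_isSyzygy [IsArtinianRing Rᵐᵒᵖ] (M : FGMod R) : ∃ N : FGMod R, IsSyzygy M N := by
  obtain ⟨P, f, hf⟩ := exists_isProjCover M
  exact ⟨⟨LinearMap.ker f⟩, P, f, hf, ⟨.refl _ _⟩⟩

lemma IsSyzygy.hasProjectiveDimensionLE_one_iff {M N : FGMod R} (hN : IsSyzygy M N) :
    CategoryTheory.HasProjectiveDimensionLE (ModuleCat.of Rᵐᵒᵖ M) 1 ↔ N.Proj := by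
  obtain ⟨P, f, ⟨hP, hf, -⟩, ⟨e⟩⟩ := hN
  have : Module.Projective Rᵐᵒᵖ P := hP
  rw [hasProjectiveDimensionLE_one_iff_projective_ker hf]
  exact ⟨fun _ => Module.Projective.of_equiv e.symm,
    fun (_ : Module.Projective Rᵐᵒᵖ N) => Module.Projective.of_equiv e⟩

lemma FGMod.IsSummand.proj_syzygy {X M K N : FGMod R} (hX : X.IsSummand M) (hK : IsSyzygy X K)
    (hN : IsSyzygy M N) (hNproj : N.Proj) : K.Proj := by
  obtain ⟨i, p, hpi⟩ := FGMod.isSummand_iff_exists_retraction.mp hX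
  have := hN.hasProjectiveDimensionLE_one_iff.mpr hNproj
  exact hK.hasProjectiveDimensionLE_one_iff.mp (hasProjectiveDimensionLE_of_retract hpi 1)

end FGMod

section IgusaTodorovGroup

variable {R}

lemma ITcls_eq_zero_of_proj {P : FGMod R} (hP : P.Proj) : ITcls R P = 0 :=
  (QuotientAddGroup.eq_zero_iff _).mpr (AddSubgroup.subset_closure (.inr ⟨P, hP, rfl⟩))

lemma ITcls_eq_add {M B C : FGMod R} (e : M ≃ₗ[Rᵐᵒᵖ] B × C) :
    ITcls R M = ITcls R B + ITcls R C := by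
  have h : ITcls R M - ITcls R B - ITcls R C = 0 :=
    (QuotientAddGroup.eq_zero_iff _).mpr (AddSubgroup.subset_closure (.inl ⟨M, B, C, ⟨e⟩, rfl⟩))
  rwa [sub_sub, sub_eq_zero] at h

lemma ITcls_congr {M N : FGMod R} (e : M ≃ₗ[Rᵐᵒᵖ] N) : ITcls R M = ITcls R N := by
  let Z : FGMod R := ⟨PUnit.{u + 1}⟩
  have hZ : Z.Proj := inferInstanceAs (Module.Projective Rᵐᵒᵖ PUnit.{u + 1})
  rw [ITcls_eq_add (C := Z) (e.trans (LinearEquiv.prodUnique (M₂ := PUnit.{u + 1})).symm),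
    ITcls_eq_zero_of_proj hZ, add_zero]

/-- The universal property of the Igusa–Todorov group: an invariant of finitely generated modules
that is additive on direct sums and vanishes on projectives factors through `K`. -/
noncomputable def ITK.lift {G : Type*} [AddCommGroup G] (f : FGMod R → G)
    (hadd : ∀ M B C : FGMod R, (M ≃ₗ[Rᵐᵒᵖ] B × C) → f M = f B + f C)
    (hproj : ∀ P : FGMod R, P.Proj → f P = 0) : ITK R →+ G :=
  QuotientAddGroup.lift _ (FreeAbelianGroup.lift f) <| (AddSubgroup.closure_le _).mpr <| by
    rintro _ (⟨M, B, C, ⟨e⟩, rfl⟩ | ⟨P, hP, rfl⟩)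
    · simp [hadd M B C e]
    · simp [hproj P hP]

lemma ITK.lift_ITcls {G : Type*} [AddCommGroup G] (f : FGMod R → G)
    (hadd : ∀ M B C : FGMod R, (M ≃ₗ[Rᵐᵒᵖ] B × C) → f M = f B + f C)
    (hproj : ∀ P : FGMod R, P.Proj → f P = 0) (M : FGMod R) :
    ITK.lift f hadd hproj (ITcls R M) = f M :=
  FreeAbelianGroup.lift_apply_of f M

variable [IsArtinianRing Rᵐᵒᵖ]

/-- The homomorphism `K → ℤ` sending `[M]` to the multiplicity of a non-projective `X` with local
endomorphism ring as a direct summand of `M`. -/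
noncomputable def ITK.multiplicityHom (X : FGMod R) [IsLocalRing (Module.End Rᵐᵒᵖ X)]
    (hX : ¬X.Proj) : ITK R →+ ℤ :=
  ITK.lift (fun M => ((summandMultiplicity Rᵐᵒᵖ X M).toNat : ℤ))
    (fun M B C e => by
      rw [summandMultiplicity_congr e, summandMultiplicity_prod,
        ENat.toNat_add (summandMultiplicity_ne_top _ _ _) (summandMultiplicity_ne_top _ _ _),
        Nat.cast_add])
    (fun P hP => by
      have : Module.Projective Rᵐᵒᵖ P := hP
      rw [summandMultiplicity_eq_zero_of_projective hX, ENat.toNat_zero, Nat.cast_zero])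

lemma ITK.multiplicityHom_ITcls_self (X : FGMod R) [IsLocalRing (Module.End Rᵐᵒᵖ X)]
    (hX : ¬X.Proj) : ITK.multiplicityHom X hX (ITcls R X) = 1 := by
  rw [ITK.multiplicityHom, ITK.lift_ITcls, summandMultiplicity_self, ENat.toNat_one, Nat.cast_one]

theorem not_isOfFinAddOrder_ITcls {X : FGMod R} (hX : X.Indec) (hproj : ¬X.Proj) :
    ¬IsOfFinAddOrder (ITcls R X) := by
  have := hX.1
  have := isLocalRing_end_of_indecomposable hX.2
  intro hfin
  have hone := (ITK.multiplicityHom X hproj).isOfFinAddOrder hfin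
  rw [ITK.multiplicityHom_ITcls_self] at hone
  exact not_isOfFinAddOrder_of_isAddTorsionFree one_ne_zero hone

end IgusaTodorovGroup

section Rank

variable {R}

lemma rkIT_bot : rkIT R ⊥ = 0 := by
  rw [rkIT, map_bot, finrank_bot]

lemma rkIT_zmultiples {x : ITK R} (hx : ¬IsOfFinAddOrder x) :
    rkIT R (AddSubgroup.zmultiples x) = 1 := by
  have hinj : Injective (LinearMap.toSpanSingleton ℤ (ITK R) x) :=
    injective_zsmul_iff_not_isOfFinAddOrder.mpr hx
  have hrange : AddSubgroup.toIntSubmodule (AddSubgroup.zmultiples x) =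
      LinearMap.range (LinearMap.toSpanSingleton ℤ (ITK R) x) := rfl
  rw [rkIT, hrange, LinearMap.finrank_range_of_inj hinj, Module.finrank_self]

lemma ITgen_eq_zmultiples {X : FGMod R} (hX : X.Indec) (hproj : ¬X.Proj) :
    ITgen R X = AddSubgroup.zmultiples (ITcls R X) := by
  rw [ITgen, AddSubgroup.zmultiples_eq_closure]
  congr 1
  ext x
  constructor
  · rintro ⟨Y, hYX, hY, -, rfl⟩
    have := hY.1
    obtain ⟨e⟩ := hX.nonempty_equiv_of_isSummand hYX
    exact ITcls_congr e
  · rintro rfl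
    exact ⟨X, .refl X, hX, hproj, rfl⟩

theorem rkIT_ITgen_of_indec [IsArtinianRing Rᵐᵒᵖ] {X : FGMod R} (hX : X.Indec) (hproj : ¬X.Proj) :
    rkIT R (ITgen R X) = 1 := by
  rw [ITgen_eq_zmultiples hX hproj, rkIT_zmultiples (not_isOfFinAddOrder_ITcls hX hproj)]

lemma map_pow_eq_bot_of_map_eq_bot {G : Type*} [AddCommGroup G] {f : AddMonoid.End G}
    {H : AddSubgroup G} (hH : H.map f = ⊥) {i : ℕ} (hi : 1 ≤ i) :
    H.map ((f ^ i : AddMonoid.End G) : G →+ G) = ⊥ := by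
  obtain ⟨k, rfl⟩ := Nat.exists_eq_add_of_le' hi
  calc H.map ((f ^ (k + 1) : AddMonoid.End G) : G →+ G)
      = (H.map f).map ((f ^ k : AddMonoid.End G) : G →+ G) := by
        rw [pow_succ]
        exact (AddSubgroup.map_map H _ _).symm
    _ = ⊥ := by rw [hH]; exact AddSubgroup.map_bot _

-- `φ` is an infimum over `ℕ`, so `φ = 0` is informative only once the ranks are known to stabilise.
lemma rkIT_ITgen_eq_zero_of_phiIT_eq_zero {OmK : AddMonoid.End (ITK R)} {M : FGMod R}
    (hphi : phiIT R OmK M = 0) (hmap : (ITgen R M).map (OmK : ITK R →+ ITK R) = ⊥) :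
    rkIT R (ITgen R M) = 0 := by
  have hpow {i : ℕ} (hi : 1 ≤ i) := map_pow_eq_bot_of_map_eq_bot hmap hi
  have hstable := Nat.sInf_mem (s := {n | ∀ i, n ≤ i →
    rkIT R ((ITgen R M).map ((OmK ^ i : AddMonoid.End (ITK R)) : ITK R →+ ITK R)) =
      rkIT R ((ITgen R M).map ((OmK ^ n : AddMonoid.End (ITK R)) : ITK R →+ ITK R))})
    ⟨1, fun i hi => by rw [hpow hi, hpow le_rfl]⟩
  change phiIT R OmK M ∈ _ at hstable
  rw [hphi] at hstable
  have hzero := hstable 1 zero_le_one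
  rw [hpow le_rfl, rkIT_bot, pow_zero] at hzero
  exact (hzero.trans (congrArg (rkIT R) (AddSubgroup.map_id _))).symm

end Rank

section PhiDimensionZero

variable {R} [IsArtinianRing Rᵐᵒᵖ] {OmK : AddMonoid.End (ITK R)}

lemma proj_of_indec_of_proj_syzygy (hOm : IsSyzygyEnd R OmK) {X N : FGMod R}
    (hphi : phiIT R OmK X = 0) (hX : X.Indec) (hN : IsSyzygy X N) (hNproj : N.Proj) : X.Proj := by
  by_contra hproj
  have hΩ : OmK (ITcls R X) = 0 := (hOm X N hN).trans (ITcls_eq_zero_of_proj hNproj)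
  have hmap : (ITgen R X).map (OmK : ITK R →+ ITK R) = ⊥ := by
    rw [ITgen_eq_zmultiples hX hproj]
    exact (AddMonoidHom.map_zmultiples _ _).trans (AddSubgroup.zmultiples_eq_bot.mpr hΩ)
  have hzero := rkIT_ITgen_eq_zero_of_phiIT_eq_zero hphi hmap
  exact one_ne_zero ((rkIT_ITgen_of_indec hX hproj).symm.trans hzero)

lemma proj_of_proj_syzygy (hOm : IsSyzygyEnd R OmK)
    (hphi : ∀ X : FGMod R, X.Indec → phiIT R OmK X = 0) {M N : FGMod R} (hN : IsSyzygy M N)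
    (hNproj : N.Proj) : M.Proj := by
  refine M.proj_of_forall_indec_isSummand fun X hXM hX => ?_
  obtain ⟨K, hK⟩ := exists_isSyzygy X
  exact proj_of_indec_of_proj_syzygy hOm (hphi X hX) hX hK (hXM.proj_syzygy hK hN hNproj)

theorem proj_of_finPd (hOm : IsSyzygyEnd R OmK)
    (hphi : ∀ X : FGMod R, X.Indec → phiIT R OmK X = 0) {M : FGMod R} (hM : FinPd M) :
    M.Proj := by
  obtain ⟨n, hn⟩ := hM
  induction n generalizing M with
  | zero => exact hn
  | succ n ih =>
    rcases hn with hproj | ⟨N, hN, hNpd⟩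
    · exact hproj
    · exact proj_of_proj_syzygy hOm hphi hN (ih hNpd)

end PhiDimensionZero

lemma pdIT_eq_zero_of_proj {R : Type u} [Ring R] {M : FGMod R} (hM : M.Proj) : pdIT M = 0 :=
  Nat.sInf_eq_zero.mpr (.inl hM)

/-- If `φ-dim(R) = 0`, then every f.g. right `R`-module has projective
dimension `0` or `∞`, and `ψ(M) = φ(M) = 0` for all f.g. `M`; in particular
`ψ-dim(R) = 0`. -/
theorem psidim_eq_zero_of_phidim_eq_zero (R : Type u) [Ring R] [IsArtinianRing Rᵐᵒᵖ]
    (OmK : AddMonoid.End (ITK R)) (hOm : IsSyzygyEnd R OmK)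
    (hphi : ∀ M : FGMod R, phiIT R OmK M = 0) :
    (∀ M : FGMod R, FinPd M → M.Proj) ∧ (∀ M : FGMod R, psiIT R OmK M = 0) := by
  have hproj (M : FGMod R) (hM : FinPd M) : M.Proj := proj_of_finPd hOm (fun X _ => hphi X) hM
  refine ⟨hproj, fun M => ?_⟩
  rw [psiIT, hphi M, zero_add]
  refine Nat.le_zero.mp (csSup_le' ?_)
  rintro d ⟨N, X, -, -, hX, rfl⟩
  exact (pdIT_eq_zero_of_proj (hproj X hX)).le
end

section
/- Let R be a right artinian ring, P an indecomposable projective right R-module containing two non-isomorphic simple modules S₁ and S₂ in its socle. Then the modules M₁ = P/S₁, M₂ = P/S₂, M₃ = P/(S₁ ⊕ S₂) are pairwise non-isomorphic indecomposable modules and φ(M₁ ⊕ M₂ ⊕ M₃) ≥ 1. -/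
open Module Function

universe u

variable (R : Type u) [Ring R]

variable {R}

variable (R)

/-!
Write `M₁ = P/S₁`, `M₂ = P/S₂` and `M₃ = P/(S₁ ⊕ S₂)`. An indecomposable projective module `P` of
finite length has a local endomorphism ring, hence is hollow, so `P` is a projective cover of each
of its nonzero quotients. Therefore the `Mᵢ` are indecomposable with syzygies `S₁`, `S₂` and
`S₁ ⊕ S₂`, and uniqueness of syzygies shows that they are non-projective and pairwise
non-isomorphic. The element `[M₃] - [M₁] - [M₂]` of `⟨M₁ ⊕ M₂ ⊕ M₃⟩` is killed by `Ω`. It has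
infinite order, because the multiplicity of `M₃` as a direct summand is a homomorphism `K → ℤ`
taking the value `1` on it. So the rank already drops at the first application of `Ω`.
-/

open LinearMap (ker range fst snd inl inr)

universe v

section Retracts

variable {A X N N' : Type*} [Ring A] [AddCommGroup X] [Module A X]
  [AddCommGroup N] [Module A N] [AddCommGroup N'] [Module A N']

theorem exists_comp_eq_id_of_isUnit_comp {f : X →ₗ[A] N} {g : N →ₗ[A] X}
    (h : IsUnit (g ∘ₗ f : Module.End A X)) : ∃ g' : N →ₗ[A] X, g' ∘ₗ f = LinearMap.id := by
  obtain ⟨u, hu⟩ := h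
  refine ⟨(↑u⁻¹ : Module.End A X) ∘ₗ g, ?_⟩
  rw [LinearMap.comp_assoc, ← hu]
  exact u.inv_mul

theorem isCompl_range_ker_of_comp_eq_id {f : X →ₗ[A] N} {g : N →ₗ[A] X}
    (h : g ∘ₗ f = LinearMap.id) : IsCompl (range f) (ker g) := by
  have hidem : IsIdempotentElem (f ∘ₗ g : Module.End A N) := by
    change f ∘ₗ (g ∘ₗ f) ∘ₗ g = f ∘ₗ g
    rw [h, LinearMap.id_comp]
  have hf : ker f = ⊥ := LinearMap.ker_eq_bot_of_inverse h
  have hg : range g = ⊤ := LinearMap.range_eq_top_of_surjective g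
    (LinearMap.surjective_of_comp_eq_id _ _ h)
  simpa only [LinearMap.range_comp_of_range_eq_top f hg, LinearMap.ker_comp_of_ker_eq_bot g hf]
    using LinearMap.IsIdempotentElem.isCompl hidem

theorem nonempty_equiv_prod_ker_of_comp_eq_id {f : X →ₗ[A] N} {g : N →ₗ[A] X}
    (h : g ∘ₗ f = LinearMap.id) : Nonempty (N ≃ₗ[A] X × ker g) :=
  ⟨(Submodule.prodEquivOfIsCompl _ _ (isCompl_range_ker_of_comp_eq_id h)).symm.trans
    ((LinearEquiv.ofInjective f (LinearMap.injective_of_comp_eq_id f g h)).symm.prodCongr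
      (LinearEquiv.refl A _))⟩

theorem nontrivial_of_nontrivial_end (A X : Type*) [Ring A] [AddCommGroup X] [Module A X]
    [Nontrivial (Module.End A X)] : Nontrivial X :=
  not_subsingleton_iff_nontrivial.1 fun _ ↦ not_subsingleton (Module.End A X) inferInstance

theorem isUnit_comp_fst_or_isUnit_comp_snd [IsLocalRing (Module.End A X)]
    {f : X →ₗ[A] N × N'} {g : N × N' →ₗ[A] X} (h : IsUnit (g ∘ₗ f : Module.End A X)) :
    IsUnit ((g ∘ₗ inl A N N') ∘ₗ (fst A N N' ∘ₗ f) : Module.End A X) ∨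
      IsUnit ((g ∘ₗ inr A N N') ∘ₗ (snd A N N' ∘ₗ f) : Module.End A X) := by
  refine IsLocalRing.isUnit_or_isUnit_of_isUnit_add ?_
  have hsum : (g ∘ₗ inl A N N') ∘ₗ (fst A N N' ∘ₗ f) + (g ∘ₗ inr A N N') ∘ₗ (snd A N N' ∘ₗ f) =
      g ∘ₗ f := by
    ext x
    simp [← map_add]
  exact hsum ▸ h

end Retracts

section Indecomposable

/-- Indecomposable modules over an arbitrary ring; `FGMod.Indec` is the special case of finitely
generated right modules. -/
def IsIndecomposable (A M : Type*) [Ring A] [AddCommGroup M] [Module A M] : Prop :=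
  Nontrivial M ∧ ∀ U V : Submodule A M, IsCompl U V → U = ⊥ ∨ V = ⊥

variable {A M N : Type*} [Ring A] [AddCommGroup M] [Module A M] [AddCommGroup N] [Module A N]

-- Fitting's lemma: every endomorphism of `M` is an automorphism or nilpotent.
theorem IsIndecomposable.isLocalRing_end [IsArtinian A M] [IsNoetherian A M]
    (hM : IsIndecomposable A M) : IsLocalRing (Module.End A M) := by
  have := hM.1
  refine .of_isUnit_or_isUnit_one_sub_self fun f ↦ ?_
  obtain ⟨n, hn⟩ := Filter.eventually_atTop.1 f.eventually_isCompl_ker_pow_range_pow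
  rcases hM.2 _ _ (hn (n + 1) n.le_succ) with hker | hrange
  · left
    rw [LinearMap.ker_eq_bot, pow_succ] at hker
    exact (Module.End.isUnit_iff f).2 (IsArtinian.bijective_of_injective_endomorphism f
      (.of_comp (f := ⇑(f ^ n)) hker))
  · right
    exact IsNilpotent.isUnit_one_sub ⟨n + 1, LinearMap.range_eq_bot.1 hrange⟩

theorem IsIndecomposable.bijective_of_comp_eq_id [Nontrivial M] (hN : IsIndecomposable A N)
    {f : M →ₗ[A] N} {g : N →ₗ[A] M} (h : g ∘ₗ f = LinearMap.id) : Function.Bijective f := by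
  have hcompl := isCompl_range_ker_of_comp_eq_id h
  have hinj : Function.Injective f := LinearMap.injective_of_comp_eq_id f g h
  refine ⟨hinj, LinearMap.range_eq_top.1 ?_⟩
  rcases hN.2 _ _ hcompl with hrange | hker
  · obtain ⟨x, hx⟩ := exists_ne (0 : M)
    rw [LinearMap.range_eq_bot] at hrange
    exact absurd (hinj (by simp [hrange])) hx
  · simpa [hker] using hcompl.sup_eq_top

end Indecomposable

section Hollow

variable {A M N : Type*} [Ring A] [AddCommGroup M] [Module A M] [AddCommGroup N] [Module A N]

-- `SupIrred (⊤ : Submodule A M)` says that `M` is hollow: it is nonzero and not the sum of two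
-- proper submodules.
theorem supIrred_top_of_projective [Module.Projective A M] [IsLocalRing (Module.End A M)] :
    SupIrred (⊤ : Submodule A M) := by
  have : Nontrivial M := nontrivial_of_nontrivial_end A M
  refine ⟨fun hmin ↦ top_ne_bot hmin.eq_bot, fun U V hUV ↦ ?_⟩
  have hsurj : Function.Surjective (U.mkQ ∘ₗ V.subtype) := by
    rw [← LinearMap.range_eq_top, LinearMap.range_comp, Submodule.range_subtype,
      LinearMap.map_eq_top_iff U.range_mkQ, U.ker_mkQ, sup_comm, hUV]
  obtain ⟨k, hk⟩ := Module.projective_lifting_property _ U.mkQ hsurj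
  have hsum : (1 - V.subtype ∘ₗ k) + V.subtype ∘ₗ k = (1 : Module.End A M) := sub_add_cancel _ _
  rcases IsLocalRing.isUnit_or_isUnit_of_add_one hsum with hU | hV
  · left
    refine top_unique (fun x _ ↦ ?_)
    obtain ⟨y, rfl⟩ := ((Module.End.isUnit_iff _).1 hU).2 x
    rw [← U.ker_mkQ, LinearMap.mem_ker, LinearMap.sub_apply, map_sub, sub_eq_zero]
    exact (LinearMap.congr_fun hk y).symm
  · right
    refine top_unique (fun x _ ↦ ?_)
    obtain ⟨y, rfl⟩ := ((Module.End.isUnit_iff _).1 hV).2 x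
    exact (k y).2

theorem supIrred_top_of_surjective [Nontrivial N] (hM : SupIrred (⊤ : Submodule A M))
    {f : M →ₗ[A] N} (hf : Function.Surjective f) : SupIrred (⊤ : Submodule A N) := by
  refine ⟨fun hmin ↦ top_ne_bot hmin.eq_bot, fun U V hUV ↦ ?_⟩
  have hsup : U.comap f ⊔ V.comap f = ⊤ := by
    have hle : ker f ≤ U.comap f ⊔ V.comap f := (LinearMap.ker_le_comap f).trans le_sup_left
    rw [← sup_eq_left.2 hle, ← LinearMap.map_eq_top_iff (LinearMap.range_eq_top.2 hf),
      Submodule.map_sup, Submodule.map_comap_eq_of_surjective hf,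
      Submodule.map_comap_eq_of_surjective hf, hUV]
  have hinj := Submodule.comap_injective_of_surjective hf
  exact (hM.2 hsup).imp (@hinj U ⊤) (@hinj V ⊤)

theorem isIndecomposable_of_supIrred_top (hM : SupIrred (⊤ : Submodule A M)) :
    IsIndecomposable A M := by
  refine ⟨Submodule.nontrivial_iff A |>.1 ⟨⊤, ⊥, hM.ne_bot⟩, fun U V hUV ↦ ?_⟩
  rcases hM.2 hUV.sup_eq_top with rfl | rfl
  · exact Or.inr (top_disjoint.1 hUV.disjoint)
  · exact Or.inl (disjoint_top.1 hUV.disjoint)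

end Hollow

theorem isDedekindFiniteMonoid_of_isLocalRing_s11 (E : Type*) [Ring E] [IsLocalRing E] :
    IsDedekindFiniteMonoid E where
  mul_eq_one_symm {a b} hab := by
    have hidem : b * a * (b * a) = b * a := by rw [mul_assoc, ← mul_assoc a, hab, one_mul]
    rcases IsLocalRing.isUnit_or_isUnit_of_add_one (add_sub_cancel (b * a) 1) with h | h
    · exact h.mul_left_cancel (by rw [hidem, mul_one])
    · have hzero : b * a = 0 :=
        h.mul_right_cancel (by rw [mul_sub, hidem, mul_one, sub_self, zero_mul])
      have : a * (b * a) * b = 1 := by rw [← mul_assoc, hab, one_mul, hab]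
      simp [hzero] at this

section Multiplicity

variable (A X N : Type*) [Ring A] [AddCommGroup X] [Module A X] [AddCommGroup N] [Module A N]

/-- The right action of `End A X` on `Hom(X, N)` by precomposition; only a local instance, since it
conflicts with the action on the values when `N` is itself a module over `(End A X)ᵐᵒᵖ`. -/
abbrev precompModule : Module (Module.End A X)ᵐᵒᵖ (X →ₗ[A] N) where
  smul c f := f ∘ₗ c.unop
  one_smul _ := rfl
  mul_smul _ _ _ := rfl
  smul_zero _ := rfl
  smul_add _ _ _ := rfl
  add_smul _ _ f := LinearMap.comp_add _ _ f
  zero_smul := LinearMap.comp_zero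

attribute [local instance] precompModule

variable [IsLocalRing (Module.End A X)]

/-- The radical maps `X → N`, for `X` with local endomorphism ring: those that are not split
injective. -/
def radicalHom : Submodule (Module.End A X)ᵐᵒᵖ (X →ₗ[A] N) where
  carrier := {f | ∀ g : N →ₗ[A] X, ¬ IsUnit (g ∘ₗ f : Module.End A X)}
  zero_mem' g := by
    rw [LinearMap.comp_zero]
    exact not_isUnit_zero
  add_mem' {f f'} hf hf' g h := by
    rw [LinearMap.comp_add] at h
    exact (IsLocalRing.isUnit_or_isUnit_of_isUnit_add h).elim (hf g) (hf' g)
  smul_mem' c f hf g h := by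
    have := isDedekindFiniteMonoid_of_isLocalRing_s11 (Module.End A X)
    exact hf g (isUnit_of_mul_isUnit_left (x := (g ∘ₗ f : Module.End A X)) (y := c.unop) h)

/-- The multiplicity of `X` as a direct summand of `N`, for `X` with local endomorphism ring: the
length of `Hom(X, N)` modulo the radical maps. -/
noncomputable def summandMult : ℕ∞ :=
  Module.length (Module.End A X)ᵐᵒᵖ ((X →ₗ[A] N) ⧸ radicalHom A X N)

variable {A X N} {N' : Type*} [AddCommGroup N'] [Module A N']

theorem mem_radicalHom {f : X →ₗ[A] N} :
    f ∈ radicalHom A X N ↔ ∀ g : N →ₗ[A] X, ¬ IsUnit (g ∘ₗ f : Module.End A X) :=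
  Iff.rfl

theorem summandMult_congr (e : N ≃ₗ[A] N') : summandMult A X N = summandMult A X N' := by
  let E : (X →ₗ[A] N) ≃ₗ[(Module.End A X)ᵐᵒᵖ] (X →ₗ[A] N') :=
    { LinearEquiv.arrowCongrAddEquiv (.refl A X) e with map_smul' := fun _ _ ↦ rfl }
  refine LinearEquiv.length_eq (Submodule.Quotient.equiv _ _ E ?_)
  ext f
  rw [Submodule.mem_map_equiv, mem_radicalHom, mem_radicalHom]
  refine ⟨fun h g hg ↦ h (g ∘ₗ e.toLinearMap) ?_, fun h g hg ↦ h (g ∘ₗ e.symm.toLinearMap) hg⟩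
  convert hg using 1
  ext x
  simp [E]

theorem mem_radicalHom_prod {f : X →ₗ[A] N × N'} :
    f ∈ radicalHom A X (N × N') ↔
      fst A N N' ∘ₗ f ∈ radicalHom A X N ∧ snd A N N' ∘ₗ f ∈ radicalHom A X N' := by
  refine ⟨fun h ↦ ⟨fun g ↦ h (g ∘ₗ fst A N N'), fun g ↦ h (g ∘ₗ snd A N N')⟩, ?_⟩
  rintro ⟨hfst, hsnd⟩ g hg
  exact (isUnit_comp_fst_or_isUnit_comp_snd hg).elim (hfst _) (hsnd _)

theorem summandMult_prod :
    summandMult A X (N × N') = summandMult A X N + summandMult A X N' := by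
  let π : (X →ₗ[A] N × N') →ₗ[(Module.End A X)ᵐᵒᵖ]
      ((X →ₗ[A] N) ⧸ radicalHom A X N) × ((X →ₗ[A] N') ⧸ radicalHom A X N') :=
    { toFun := fun f ↦ (Submodule.Quotient.mk (fst A N N' ∘ₗ f),
        Submodule.Quotient.mk (snd A N N' ∘ₗ f))
      map_add' := fun f f' ↦ by simp [LinearMap.comp_add]
      map_smul' := fun _ _ ↦ rfl }
  have hsurj : Function.Surjective π := by
    rintro ⟨f, f'⟩
    obtain ⟨f, rfl⟩ := Submodule.Quotient.mk_surjective _ f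
    obtain ⟨f', rfl⟩ := Submodule.Quotient.mk_surjective _ f'
    exact ⟨f.prod f', rfl⟩
  have hker : ker π = radicalHom A X (N × N') := by
    ext f
    rw [mem_radicalHom_prod, LinearMap.mem_ker, ← Submodule.Quotient.mk_eq_zero,
      ← Submodule.Quotient.mk_eq_zero]
    exact Prod.mk_eq_zero
  rw [summandMult, ← hker, (π.quotKerEquivOfSurjective hsurj).length_eq, Module.length_prod,
    summandMult, summandMult]

theorem summandMult_eq_zero_iff :
    summandMult A X N = 0 ↔
      ∀ (f : X →ₗ[A] N) (g : N →ₗ[A] X), ¬ IsUnit (g ∘ₗ f : Module.End A X) := by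
  rw [summandMult, Module.length_eq_zero_iff, Submodule.Quotient.subsingleton_iff,
    Submodule.eq_top_iff']
  rfl

theorem summandMult_eq_zero_of_projective [Module.Projective A N]
    (hX : ¬ Module.Projective A X) : summandMult A X N = 0 := by
  refine summandMult_eq_zero_iff.2 fun f g hu ↦ hX ?_
  obtain ⟨g', hg'⟩ := exists_comp_eq_id_of_isUnit_comp hu
  exact .of_split f g' hg'

theorem IsIndecomposable.summandMult_eq_zero (hN : IsIndecomposable A N)
    (h : ¬ Nonempty (X ≃ₗ[A] N)) : summandMult A X N = 0 := by
  refine summandMult_eq_zero_iff.2 fun f g hu ↦ h ?_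
  have : Nontrivial X := nontrivial_of_nontrivial_end A X
  obtain ⟨g', hg'⟩ := exists_comp_eq_id_of_isUnit_comp hu
  exact ⟨LinearEquiv.ofBijective f (hN.bijective_of_comp_eq_id hg')⟩

variable (A X) in
theorem summandMult_self : summandMult A X X = 1 := by
  have := isDedekindFiniteMonoid_of_isLocalRing_s11 (Module.End A X)
  rw [summandMult, Module.length_eq_one_iff, isSimpleModule_iff_isCoatom]
  refine ⟨fun htop ↦ ?_, fun W hW ↦ ?_⟩
  · have hid : LinearMap.id ∈ radicalHom A X X := htop ▸ Submodule.mem_top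
    exact hid LinearMap.id isUnit_one
  · obtain ⟨f, hfW, hf⟩ := Set.exists_of_ssubset hW
    simp only [SetLike.mem_coe, mem_radicalHom, not_forall, not_not] at hf
    obtain ⟨g, hg⟩ := hf
    obtain ⟨u, rfl⟩ : IsUnit (f : Module.End A X) :=
      isUnit_of_mul_isUnit_right (x := (g : Module.End A X)) hg
    refine top_unique fun k _ ↦ ?_
    have hk : MulOpposite.op (↑u⁻¹ * k : Module.End A X) • (u : Module.End A X) = k :=
      u.mul_inv_cancel_left k
    exact hk ▸ W.smul_mem _ hfW

theorem summandMult_le_length : summandMult A X N ≤ Module.length A N := by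
  induction hN : Module.length A N using WellFoundedLT.induction generalizing N with | ind ℓ ih
  obtain rfl | hℓ := eq_or_ne ℓ ⊤
  · exact le_top
  obtain hzero | hne := eq_or_ne (summandMult A X N) 0
  · exact hzero ▸ zero_le
  obtain ⟨f, g, hu⟩ : ∃ (f : X →ₗ[A] N) (g : N →ₗ[A] X), IsUnit (g ∘ₗ f : Module.End A X) := by
    simpa [summandMult_eq_zero_iff] using hne
  obtain ⟨g', hg'⟩ := exists_comp_eq_id_of_isUnit_comp hu
  obtain ⟨e⟩ := nonempty_equiv_prod_ker_of_comp_eq_id hg'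
  have : Nontrivial X := nontrivial_of_nontrivial_end A X
  have hlen : Module.length A X + Module.length A (ker g') = ℓ := by
    rw [← hN, e.length_eq, Module.length_prod]
  have hX : 1 ≤ Module.length A X := Order.one_le_iff_pos.2 Module.length_pos
  have hlt : Module.length A (ker g') < ℓ := by
    rw [← hlen] at hℓ ⊢
    exact ENat.lt_add_left (WithTop.add_ne_top.1 hℓ).2 Module.length_pos
  rw [summandMult_congr e, summandMult_prod, summandMult_self, ← hlen]
  exact add_le_add hX (ih _ hlt rfl)

theorem summandMult_ne_top [IsArtinian A N] [IsNoetherian A N] : summandMult A X N ≠ ⊤ :=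
  ne_top_of_le_ne_top Module.length_ne_top summandMult_le_length

end Multiplicity

section Syzygies

variable {R} {L M M' N N' P : FGMod R}

theorem FGMod.isSummand_iff :
    N.IsSummand M ↔ ∃ (f : N →ₗ[Rᵐᵒᵖ] M) (g : M →ₗ[Rᵐᵒᵖ] N), g ∘ₗ f = LinearMap.id := by
  constructor
  · rintro ⟨U, V, hUV, ⟨e⟩⟩
    refine ⟨U.subtype ∘ₗ e, e.symm ∘ₗ U.projectionOnto V hUV, ?_⟩
    ext x
    simp
  · rintro ⟨f, g, h⟩
    exact ⟨range f, ker g, isCompl_range_ker_of_comp_eq_id h,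
      ⟨LinearEquiv.ofInjective f (LinearMap.injective_of_comp_eq_id f g h)⟩⟩

theorem IsProjCover.surjective_of_comp {X : Type*} [AddCommGroup X] [Module Rᵐᵒᵖ X]
    {f : P →ₗ[Rᵐᵒᵖ] M} (hf : IsProjCover M P f) {k : X →ₗ[Rᵐᵒᵖ] P}
    (hk : Function.Surjective (f ∘ₗ k)) : Function.Surjective k := by
  rw [← LinearMap.range_eq_top, LinearMap.range_comp,
    LinearMap.map_eq_top_iff (LinearMap.range_eq_top.2 hf.2.1)] at hk
  exact LinearMap.range_eq_top.1 (hf.2.2 _ hk)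

theorem IsProjCover.ker_eq_bot {f : P →ₗ[Rᵐᵒᵖ] M} (hf : IsProjCover M P f) (hM : M.Proj) :
    ker f = ⊥ := by
  have : Module.Projective Rᵐᵒᵖ M := hM
  obtain ⟨s, hs⟩ := Module.projective_lifting_property f LinearMap.id hf.2.1
  have hsurj : Function.Surjective s := hf.surjective_of_comp (hs ▸ Function.surjective_id)
  have hcompl := isCompl_range_ker_of_comp_eq_id hs
  rw [LinearMap.range_eq_top.2 hsurj] at hcompl
  exact top_disjoint.1 hcompl.disjoint

theorem IsSyzygy.not_proj [Nontrivial N] (h : IsSyzygy M N) : ¬ M.Proj := by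
  obtain ⟨P, f, hf, ⟨e⟩⟩ := h
  intro hM
  have : Subsingleton N := by
    have := Submodule.subsingleton_iff_eq_bot.2 (hf.ker_eq_bot hM)
    exact e.toEquiv.subsingleton
  exact not_subsingleton N this

theorem IsSyzygy.iso_of_iso (h : IsSyzygy M N) (h' : IsSyzygy M' N') (hM : M.Iso M') :
    N.Iso N' := by
  obtain ⟨P, f, hf, ⟨eN⟩⟩ := h
  obtain ⟨P', f', hf', ⟨eN'⟩⟩ := h'
  obtain ⟨e⟩ := hM
  have : Module.Projective Rᵐᵒᵖ P := hf.1
  have : Module.Projective Rᵐᵒᵖ P' := hf'.1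
  obtain ⟨k, hk⟩ := Module.projective_lifting_property f' (e.toLinearMap ∘ₗ f) hf'.2.1
  have hksurj : Function.Surjective k :=
    hf'.surjective_of_comp (hk ▸ e.surjective.comp hf.2.1)
  obtain ⟨s, hs⟩ := Module.projective_lifting_property k LinearMap.id hksurj
  have hfs : e.toLinearMap ∘ₗ f ∘ₗ s = f' := by
    rw [← LinearMap.comp_assoc, ← hk, LinearMap.comp_assoc, hs, LinearMap.comp_id]
  have hefs : Function.Surjective (e.toLinearMap ∘ₗ f ∘ₗ s) := hfs ▸ hf'.2.1
  have hssurj : Function.Surjective s :=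
    hf.surjective_of_comp ((EquivLike.comp_surjective (f ∘ₗ s) e).1 hefs)
  have hkinj : Function.Injective k :=
    (Function.LeftInverse.rightInverse_of_surjective (f := k) (g := s)
      (LinearMap.congr_fun hs) hssurj).injective
  let K : P ≃ₗ[Rᵐᵒᵖ] P' := LinearEquiv.ofBijective k ⟨hkinj, hksurj⟩
  have hker : ker f = (ker f').comap K.toLinearMap := by
    rw [← LinearMap.ker_comp]
    exact (hk ▸ e.ker_comp f).symm
  exact ⟨eN ≪≫ₗ LinearEquiv.ofEq _ _ hker ≪≫ₗ K.ofSubmodule' (ker f') ≪≫ₗ eN'.symm⟩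

theorem IsSyzygy.not_iso_of_equiv_prod [IsNoetherianRing Rᵐᵒᵖ] {X : Type*} [AddCommGroup X]
    [Module Rᵐᵒᵖ X] [Nontrivial X] (h : IsSyzygy M N) (h' : IsSyzygy M' N')
    (e : N' ≃ₗ[Rᵐᵒᵖ] N × X) : ¬ M.Iso M' := by
  intro hM
  obtain ⟨e'⟩ := h.iso_of_iso h' hM
  exact not_subsingleton X
    (IsNoetherian.subsingleton_of_prod_injective _ (e' ≪≫ₗ e).symm.injective)

theorem isSyzygy_of_equiv_quotient (hP : P.Proj) (hhollow : SupIrred (⊤ : Submodule Rᵐᵒᵖ P))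
    {S : Submodule Rᵐᵒᵖ P} (hS : S ≠ ⊤) (eM : M ≃ₗ[Rᵐᵒᵖ] P ⧸ S) (eN : N ≃ₗ[Rᵐᵒᵖ] S) :
    IsSyzygy M N := by
  have hker : ker (eM.symm.toLinearMap ∘ₗ S.mkQ) = S := by
    rw [LinearEquiv.ker_comp, S.ker_mkQ]
  refine ⟨P, eM.symm.toLinearMap ∘ₗ S.mkQ, ⟨hP, eM.symm.surjective.comp S.mkQ_surjective, ?_⟩,
    ⟨eN ≪≫ₗ LinearEquiv.ofEq _ _ hker.symm⟩⟩
  intro U hU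
  rw [hker] at hU
  exact (hhollow.2 hU).resolve_right hS

theorem indec_of_equiv_quotient (hhollow : SupIrred (⊤ : Submodule Rᵐᵒᵖ P))
    {S : Submodule Rᵐᵒᵖ P} (hS : S ≠ ⊤) (e : M ≃ₗ[Rᵐᵒᵖ] P ⧸ S) : M.Indec := by
  have : Nontrivial (P ⧸ S) := Submodule.Quotient.nontrivial_iff.2 hS
  have : Nontrivial M := e.toEquiv.nontrivial
  exact isIndecomposable_of_supIrred_top (supIrred_top_of_surjective hhollow
    (f := e.symm.toLinearMap ∘ₗ S.mkQ) (e.symm.surjective.comp S.mkQ_surjective))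

end Syzygies

section IgusaTodorovGroup

variable {R} {L M N : FGMod R}

theorem ITcls_eq_add_of_equiv_prod (e : M ≃ₗ[Rᵐᵒᵖ] (N × L : Type u)) :
    ITcls R M = ITcls R N + ITcls R L := by
  have hrel : FreeAbelianGroup.of M - FreeAbelianGroup.of N - FreeAbelianGroup.of L ∈
      AddSubgroup.closure (ITRel R) :=
    AddSubgroup.subset_closure (Or.inl ⟨M, N, L, ⟨e⟩, rfl⟩)
  have hzero : ITcls R M - ITcls R N - ITcls R L = 0 := (QuotientAddGroup.eq_zero_iff _).2 hrel
  rwa [sub_sub, sub_eq_zero] at hzero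

theorem ITcls_eq_zero_of_proj_s11 (hM : M.Proj) : ITcls R M = 0 :=
  (QuotientAddGroup.eq_zero_iff _).2 (AddSubgroup.subset_closure (Or.inr ⟨M, hM, rfl⟩))

theorem ITcls_eq_of_iso (h : M.Iso N) : ITcls R M = ITcls R N := by
  obtain ⟨e⟩ := h
  let Z : FGMod R := ⟨PUnit.{u + 1}⟩
  have hZ : Z.Proj := inferInstanceAs (Module.Projective Rᵐᵒᵖ PUnit.{u + 1})
  have eZ : M ≃ₗ[Rᵐᵒᵖ] (N × Z : Type u) :=
    e ≪≫ₗ (LinearEquiv.prodUnique (M₂ := PUnit.{u + 1})).symm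
  rw [ITcls_eq_add_of_equiv_prod eZ, ITcls_eq_zero_of_proj_s11 hZ, add_zero]

theorem ITgen_eq_zmultiples_s11 (hM : M.Indec) (hproj : ¬ M.Proj) :
    ITgen R M = AddSubgroup.zmultiples (ITcls R M) := by
  rw [ITgen, AddSubgroup.zmultiples_eq_closure]
  congr 1
  ext x
  constructor
  · rintro ⟨N, hsummand, hN, -, rfl⟩
    have := hN.1
    obtain ⟨f, g, h⟩ := FGMod.isSummand_iff.1 hsummand
    exact ITcls_eq_of_iso
      ⟨LinearEquiv.ofBijective f (IsIndecomposable.bijective_of_comp_eq_id hM h)⟩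
  · rintro rfl
    exact ⟨M, FGMod.isSummand_iff.2 ⟨LinearMap.id, LinearMap.id, rfl⟩, hM, hproj, rfl⟩

variable [IsArtinianRing Rᵐᵒᵖ]

theorem FGMod.Indec.isLocalRing_end (hM : M.Indec) : IsLocalRing (Module.End Rᵐᵒᵖ M) :=
  IsIndecomposable.isLocalRing_end hM

theorem FGMod.Indec.isSummand_or_isSummand (hN : N.Indec) (h : N.IsSummand (M.prod L)) :
    N.IsSummand M ∨ N.IsSummand L := by
  have := hN.isLocalRing_end
  obtain ⟨f, g, hgf⟩ := FGMod.isSummand_iff.1 h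
  have hunit : IsUnit (g ∘ₗ f : Module.End Rᵐᵒᵖ N) := hgf ▸ isUnit_one
  exact (isUnit_comp_fst_or_isUnit_comp_snd hunit).imp
    (fun h ↦ FGMod.isSummand_iff.2 ⟨_, exists_comp_eq_id_of_isUnit_comp h⟩)
    (fun h ↦ FGMod.isSummand_iff.2 ⟨_, exists_comp_eq_id_of_isUnit_comp h⟩)

theorem ITgen_prod : ITgen R (M.prod L) = ITgen R M ⊔ ITgen R L := by
  simp only [ITgen, ← AddSubgroup.closure_union]
  congr 1
  ext x
  constructor
  · rintro ⟨N, h, hN, hproj, rfl⟩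
    exact (hN.isSummand_or_isSummand h).imp (⟨N, ·, hN, hproj, rfl⟩) (⟨N, ·, hN, hproj, rfl⟩)
  · rintro (⟨N, h, hN, hproj, rfl⟩ | ⟨N, h, hN, hproj, rfl⟩) <;>
      refine ⟨N, ?_, hN, hproj, rfl⟩ <;>
      obtain ⟨f, g, hgf⟩ := FGMod.isSummand_iff.1 h
    · exact FGMod.isSummand_iff.2 ⟨inl Rᵐᵒᵖ M L ∘ₗ f, g ∘ₗ fst Rᵐᵒᵖ M L, hgf⟩
    · exact FGMod.isSummand_iff.2 ⟨inr Rᵐᵒᵖ M L ∘ₗ f, g ∘ₗ snd Rᵐᵒᵖ M L, hgf⟩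

/-- The homomorphism `K → ℤ` sending `[N]` to the multiplicity of the non-projective module `X`,
with local endomorphism ring, as a direct summand of `N`. -/
noncomputable def ITmult (X : FGMod R) [IsLocalRing (Module.End Rᵐᵒᵖ X)] (hX : ¬ X.Proj) :
    ITK R →+ ℤ :=
  QuotientAddGroup.lift (AddSubgroup.closure (ITRel R))
    (FreeAbelianGroup.lift fun N : FGMod R ↦ ((summandMult Rᵐᵒᵖ X N).toNat : ℤ)) <| by
      rw [AddSubgroup.closure_le]
      rintro _ (⟨M, N, L, ⟨e⟩, rfl⟩ | ⟨Q, hQ, rfl⟩)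
      · have hmult : summandMult Rᵐᵒᵖ X M = summandMult Rᵐᵒᵖ X N + summandMult Rᵐᵒᵖ X L := by
          rw [summandMult_congr e, summandMult_prod]
        simp [hmult, ENat.toNat_add summandMult_ne_top summandMult_ne_top]
      · have : Module.Projective Rᵐᵒᵖ Q := hQ
        simp [summandMult_eq_zero_of_projective (N := Q) hX]

theorem ITmult_ITcls (X : FGMod R) [IsLocalRing (Module.End Rᵐᵒᵖ X)] (hX : ¬ X.Proj)
    (N : FGMod R) : ITmult X hX (ITcls R N) = (summandMult Rᵐᵒᵖ X N).toNat :=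
  FreeAbelianGroup.lift_apply_of _ _

end IgusaTodorovGroup

theorem finrank_map_lt_of_apply_eq_zero {A : Type*} {V : Type v} {W : Type*} [Ring A]
    [IsNoetherianRing A] [HasRankNullity.{v} A] [AddCommGroup V] [Module A V] [AddCommGroup W]
    [Module A W] {H : Submodule A V} [Module.Finite A H] {f : V →ₗ[A] W} {x : V} (hx : x ∈ H)
    (hfx : f x = 0) (htorsion : ∀ a : A, a • x = 0 → a = 0) :
    Module.finrank A (H.map f) < Module.finrank A H := by
  have := nontrivial_of_hasRankNullity.{v} A
  have hrank := Submodule.finrank_quotient_add_finrank (ker (f.domRestrict H))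
  rw [(f.domRestrict H).quotKerEquivRange.finrank_eq, LinearMap.range_domRestrict] at hrank
  have hker : Module.finrank A (ker (f.domRestrict H)) ≠ 0 := by
    rw [Ne, Module.finrank_eq_zero_iff]
    intro h
    obtain ⟨a, ha, hax⟩ := h ⟨⟨x, hx⟩, hfx⟩
    exact ha (htorsion a (congrArg (fun y : ker (f.domRestrict H) ↦ ((y : H) : V)) hax))
  omega

theorem fg_zmultiples {G : Type*} [AddGroup G] (x : G) : (AddSubgroup.zmultiples x).FG :=
  ⟨{x}, by rw [Finset.coe_singleton, AddSubgroup.zmultiples_eq_closure]⟩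

section Rank

variable {R} {OmK : AddMonoid.End (ITK R)} {M : FGMod R}

theorem rkIT_map_le {H : AddSubgroup (ITK R)} (hH : H.FG) (f : ITK R →+ ITK R) :
    rkIT R (H.map f) ≤ rkIT R H := by
  have : Module.Finite ℤ (AddSubgroup.toIntSubmodule H) :=
    Module.Finite.iff_fg.2 ((Submodule.fg_iff_addSubgroup_fg _).2 hH)
  exact Submodule.finrank_map_le f.toIntLinearMap (AddSubgroup.toIntSubmodule H)

theorem rkIT_map_lt {H : AddSubgroup (ITK R)} (hH : H.FG) {f : ITK R →+ ITK R} {x : ITK R}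
    (hx : x ∈ H) (hfx : f x = 0) (horder : ¬ IsOfFinAddOrder x) :
    rkIT R (H.map f) < rkIT R H := by
  have : Module.Finite ℤ (AddSubgroup.toIntSubmodule H) :=
    Module.Finite.iff_fg.2 ((Submodule.fg_iff_addSubgroup_fg _).2 hH)
  refine finrank_map_lt_of_apply_eq_zero (H := AddSubgroup.toIntSubmodule H)
    (f := f.toIntLinearMap) hx hfx fun a ha ↦ ?_
  by_contra hne
  exact horder (isOfFinAddOrder_iff_zsmul_eq_zero.2 ⟨a, hne, ha⟩)

theorem one_le_phiIT (hfg : (ITgen R M).FG) {x : ITK R} (hx : x ∈ ITgen R M) (hzero : OmK x = 0)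
    (horder : ¬ IsOfFinAddOrder x) : 1 ≤ phiIT R OmK M := by
  let H (n : ℕ) : AddSubgroup (ITK R) :=
    (ITgen R M).map ((OmK ^ n : AddMonoid.End (ITK R)) : ITK R →+ ITK R)
  have hH0 : H 0 = ITgen R M := AddSubgroup.map_id _
  have hHsucc (n : ℕ) : H (n + 1) = (H n).map (OmK : ITK R →+ ITK R) := by
    simp only [H, pow_succ']
    exact (AddSubgroup.map_map _ _ _).symm
  have hHfg (n : ℕ) : (H n).FG :=
    (AddSubgroup.fg_iff_addSubmonoid_fg _).2 (((AddSubgroup.fg_iff_addSubmonoid_fg _).1 hfg).map _)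
  have hanti : Antitone fun n ↦ rkIT R (H n) :=
    antitone_nat_of_succ_le fun n ↦ by rw [hHsucc]; exact rkIT_map_le (hHfg n) OmK
  obtain ⟨n, hn⟩ := WellFoundedLT.antitone_chain_condition hanti
  refine Nat.one_le_iff_ne_zero.2 fun hphi ↦ ?_
  rcases Nat.sInf_eq_zero.1 hphi with hstable | hempty
  · have hlt : rkIT R (H 1) < rkIT R (H 0) := by
      rw [hHsucc 0, hH0]
      exact rkIT_map_lt hfg hx hzero horder
    exact hlt.ne (hstable 1 zero_le_one)
  · exact Set.eq_empty_iff_forall_notMem.1 hempty n fun i hi ↦ (hn i hi).symm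

end Rank

variable {R} in
theorem one_le_phiIT_of_isSyzygy_prod [IsArtinianRing Rᵐᵒᵖ] {OmK : AddMonoid.End (ITK R)}
    (hOm : IsSyzygyEnd R OmK) {M₁ M₂ M₃ N₁ N₂ N₃ : FGMod R} [Nontrivial N₁] [Nontrivial N₂]
    (hM₁ : M₁.Indec) (hM₂ : M₂.Indec) (hM₃ : M₃.Indec) (h₁ : IsSyzygy M₁ N₁)
    (h₂ : IsSyzygy M₂ N₂) (h₃ : IsSyzygy M₃ N₃) (e : N₃ ≃ₗ[Rᵐᵒᵖ] (N₁ × N₂ : Type u)) :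
    1 ≤ phiIT R OmK (M₁.prod (M₂.prod M₃)) := by
  have : Nontrivial N₃ := e.toEquiv.nontrivial
  have := hM₃.isLocalRing_end
  have hgen : ITgen R (M₁.prod (M₂.prod M₃)) = AddSubgroup.zmultiples (ITcls R M₁) ⊔
      (AddSubgroup.zmultiples (ITcls R M₂) ⊔ AddSubgroup.zmultiples (ITcls R M₃)) := by
    rw [ITgen_prod, ITgen_prod, ITgen_eq_zmultiples_s11 hM₁ h₁.not_proj,
      ITgen_eq_zmultiples_s11 hM₂ h₂.not_proj, ITgen_eq_zmultiples_s11 hM₃ h₃.not_proj]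
  refine one_le_phiIT (x := ITcls R M₃ - (ITcls R M₁ + ITcls R M₂)) ?_ ?_ ?_ fun horder ↦ ?_
  · rw [hgen]
    exact (fg_zmultiples _).sup ((fg_zmultiples _).sup (fg_zmultiples _))
  · rw [hgen, sub_eq_neg_add, neg_add, add_assoc]
    have hmem (x : ITK R) : x ∈ AddSubgroup.zmultiples x := AddSubgroup.mem_zmultiples x
    exact AddSubgroup.add_mem_sup (neg_mem (hmem _))
      (AddSubgroup.add_mem_sup (neg_mem (hmem _)) (hmem _))
  · rw [map_sub, map_add, hOm _ _ h₁, hOm _ _ h₂, hOm _ _ h₃,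
      ITcls_eq_add_of_equiv_prod e, sub_self]
  · have hmult : ITmult M₃ h₃.not_proj (ITcls R M₃ - (ITcls R M₁ + ITcls R M₂)) = 1 := by
      have h₁₃ := h₁.not_iso_of_equiv_prod h₃ e
      have h₂₃ := h₂.not_iso_of_equiv_prod h₃ (e ≪≫ₗ LinearEquiv.prodComm Rᵐᵒᵖ N₁ N₂)
      rw [map_sub, map_add, ITmult_ITcls, ITmult_ITcls, ITmult_ITcls, summandMult_self,
        IsIndecomposable.summandMult_eq_zero hM₁ fun ⟨e⟩ ↦ h₁₃ ⟨e.symm⟩,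
        IsIndecomposable.summandMult_eq_zero hM₂ fun ⟨e⟩ ↦ h₂₃ ⟨e.symm⟩]
      simp
    have := (ITmult M₃ h₃.not_proj).isOfFinAddOrder horder
    rw [hmult, isOfFinAddOrder_iff_eq_zero] at this
    exact one_ne_zero this

theorem nonempty_prod_equiv_sup_of_disjoint {A M : Type*} [Ring A] [AddCommGroup M] [Module A M]
    {U V : Submodule A M} (h : Disjoint U V) :
    Nonempty ((U × V) ≃ₗ[A] (U ⊔ V : Submodule A M)) := by
  have hker : ker (U.subtype.coprod V.subtype) = ⊥ := by
    rw [LinearMap.ker_coprod_of_disjoint_range _ _ (by simpa using h), U.ker_subtype, V.ker_subtype,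
      Submodule.prod_bot]
  exact ⟨LinearEquiv.ofInjective _ (LinearMap.ker_eq_bot.1 hker) ≪≫ₗ
    LinearEquiv.ofEq _ _ (U.sup_eq_range V).symm⟩

theorem phi_ge_one_of_two_noniso_simples_in_socle_general (R : Type u) [Ring R]
    [IsArtinianRing Rᵐᵒᵖ]
    (OmK : AddMonoid.End (ITK R)) (hOm : IsSyzygyEnd R OmK)
    (P : FGMod R) (hind : P.Indec) (hproj : P.Proj)
    (S₁ S₂ : Submodule Rᵐᵒᵖ P) (hS₁ : S₁ ≠ ⊥) (hS₂ : S₂ ≠ ⊥) (hdisj : Disjoint S₁ S₂)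
    (hniso : ¬ Nonempty (S₁ ≃ₗ[Rᵐᵒᵖ] S₂))
    (M₁ M₂ M₃ : FGMod R)
    (hM₁ : Nonempty (M₁ ≃ₗ[Rᵐᵒᵖ] (P.carrier ⧸ S₁)))
    (hM₂ : Nonempty (M₂ ≃ₗ[Rᵐᵒᵖ] (P.carrier ⧸ S₂)))
    (hM₃ : Nonempty (M₃ ≃ₗ[Rᵐᵒᵖ] (P.carrier ⧸ (S₁ ⊔ S₂)))) :
    M₁.Indec ∧ M₂.Indec ∧ M₃.Indec ∧
      ¬ M₁.Iso M₂ ∧ ¬ M₁.Iso M₃ ∧ ¬ M₂.Iso M₃ ∧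
      1 ≤ phiIT R OmK (M₁.prod (M₂.prod M₃)) := by
  obtain ⟨e₁⟩ := hM₁
  obtain ⟨e₂⟩ := hM₂
  obtain ⟨e₃⟩ := hM₃
  have := hind.isLocalRing_end
  have : Module.Projective Rᵐᵒᵖ P := hproj
  have hhollow : SupIrred (⊤ : Submodule Rᵐᵒᵖ P) := supIrred_top_of_projective
  have htop₁ : S₁ ≠ ⊤ := by
    rintro rfl
    exact hS₂ (top_disjoint.1 hdisj)
  have htop₂ : S₂ ≠ ⊤ := by
    rintro rfl
    exact hS₁ (disjoint_top.1 hdisj)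
  have htop₃ : S₁ ⊔ S₂ ≠ ⊤ := fun h ↦ (hhollow.2 h).elim htop₁ htop₂
  have : Nontrivial S₁ := Submodule.nontrivial_iff_ne_bot.2 hS₁
  have : Nontrivial S₂ := Submodule.nontrivial_iff_ne_bot.2 hS₂
  obtain ⟨e⟩ := nonempty_prod_equiv_sup_of_disjoint hdisj
  have h₁ : IsSyzygy M₁ ⟨S₁⟩ := isSyzygy_of_equiv_quotient hproj hhollow htop₁ e₁ (.refl _ _)
  have h₂ : IsSyzygy M₂ ⟨S₂⟩ := isSyzygy_of_equiv_quotient hproj hhollow htop₂ e₂ (.refl _ _)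
  have h₃ : IsSyzygy M₃ ⟨(S₁ ⊔ S₂ : Submodule Rᵐᵒᵖ P)⟩ :=
    isSyzygy_of_equiv_quotient hproj hhollow htop₃ e₃ (.refl _ _)
  have hM₁ : M₁.Indec := indec_of_equiv_quotient hhollow htop₁ e₁
  have hM₂ : M₂.Indec := indec_of_equiv_quotient hhollow htop₂ e₂
  have hM₃ : M₃.Indec := indec_of_equiv_quotient hhollow htop₃ e₃
  exact ⟨hM₁, hM₂, hM₃, fun h ↦ hniso (h₁.iso_of_iso h₂ h), h₁.not_iso_of_equiv_prod h₃ e.symm,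
    h₂.not_iso_of_equiv_prod h₃ (e.symm ≪≫ₗ LinearEquiv.prodComm Rᵐᵒᵖ S₁ S₂),
    one_le_phiIT_of_isSyzygy_prod hOm hM₁ hM₂ hM₃ h₁ h₂ h₃ e.symm⟩

/-- If an indecomposable projective `P` contains two non-isomorphic
simple submodules `S₁, S₂` (in its socle), then `P/S₁`, `P/S₂`, `P/(S₁ ⊕ S₂)` are
pairwise non-isomorphic indecomposable modules and `φ(M₁ ⊕ M₂ ⊕ M₃) ≥ 1`. -/
theorem phi_ge_one_of_two_noniso_simples_in_socle (R : Type u) [Ring R]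
    [IsArtinianRing Rᵐᵒᵖ]
    (OmK : AddMonoid.End (ITK R)) (hOm : IsSyzygyEnd R OmK)
    (P : FGMod R) (hind : P.Indec) (hproj : P.Proj)
    (S₁ S₂ : Submodule Rᵐᵒᵖ P)
    (hS₁ : IsSimpleModule Rᵐᵒᵖ S₁) (hS₂ : IsSimpleModule Rᵐᵒᵖ S₂)
    (hniso : ¬ Nonempty (S₁ ≃ₗ[Rᵐᵒᵖ] S₂))
    (M₁ M₂ M₃ : FGMod R)
    (hM₁ : Nonempty (M₁ ≃ₗ[Rᵐᵒᵖ] (P.carrier ⧸ S₁)))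
    (hM₂ : Nonempty (M₂ ≃ₗ[Rᵐᵒᵖ] (P.carrier ⧸ S₂)))
    (hM₃ : Nonempty (M₃ ≃ₗ[Rᵐᵒᵖ] (P.carrier ⧸ (S₁ ⊔ S₂)))) :
    M₁.Indec ∧ M₂.Indec ∧ M₃.Indec ∧
      ¬ M₁.Iso M₂ ∧ ¬ M₁.Iso M₃ ∧ ¬ M₂.Iso M₃ ∧
      1 ≤ phiIT R OmK (M₁.prod (M₂.prod M₃)) := by
  have hatom₁ : IsAtom S₁ := isSimpleModule_iff_isAtom.1 hS₁
  have hatom₂ : IsAtom S₂ := isSimpleModule_iff_isAtom.1 hS₂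
  have hne : S₁ ≠ S₂ := fun h ↦ hniso ⟨LinearEquiv.ofEq _ _ h⟩
  exact phi_ge_one_of_two_noniso_simples_in_socle_general R OmK hOm P hind hproj S₁ S₂ hatom₁.1
    hatom₂.1 (hatom₁.disjoint_of_ne hatom₂ hne) hniso M₁ M₂ M₃ hM₁ hM₂ hM₃
end
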